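/- arXiv:1805.07754 — 4 statements merged into one kernel-verified Lean document; each statement's English description precedes it below -/
import Mathlib

section
/- Let C be a small category, and suppose there exist an object c0 of C, an endofunctor Φ : C → C, and natural transformations 𝟭_C ⟶ Φ and Δ_{c0} ⟶ Φ from the constant functor at c0 (for instance, this holds when C has binary coproducts, with Φ = − ⊔ c0). Let A be an abelian category with small coproducts, exact coproducts (AB4), and enough projectives, and let A be an object of A. Then for the constant functor A^const : C → A with value A one has colim_0 A^const ≅ A, and colim_n A^const = 0 for all n ≥ 1. -/
/-!
STATEMENT 2: Let `C` be a small category equipped with an object `c₀`, an endofunctor `Φ`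
and natural transformations `𝟭 C ⟶ Φ` and `Δ_{c₀} ⟶ Φ` (e.g. `Φ = − ⊔ c₀` when binary
coproducts exist).  Let `A` be an abelian category with small coproducts, exact
coproducts (AB4) and enough projectives.  Then for the constant functor `A^const` at an
object `A₀` one has `colim₀ A^const ≅ A₀` and `colimₙ A^const = 0` for `n ≥ 1`, where
`colimₙ` denotes the `n`-th left derived functor of the colimit functor `(C ⥤ A) ⥤ A`.
-/

open CategoryTheory CategoryTheory.Limits

universe w' w v u

section DerivedColim

variable (C : Type u) [Category.{v} C] (A : Type w) [Category.{w'} A] [Abelian A]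
  [HasColimitsOfShape C A]

noncomputable instance colimAdditive : (colim (J := C) (C := A)).Additive := by
  have := preservesBinaryBiproducts_of_preservesBinaryCoproducts (colim (J := C) (C := A))
  exact Functor.additive_of_preservesBinaryBiproducts _

/-- The `n`-th left derived functor of the colimit functor, `colimₙ`. -/
noncomputable def derivedColim [EnoughProjectives (C ⥤ A)] (n : ℕ) : (C ⥤ A) ⥤ A :=
  (colim (J := C) (C := A)).leftDerived n

end DerivedColim

/-!
Let `K` be the constant functor at `A₀` and `P → K` a projective resolution in `C ⥤ A`.

Precomposition with `Φ` is exact, so `P_Φ = (P_n(Φ -))` is a resolution of `K ∘ Φ = K`, and so is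
the complex of constant functors `P(c₀)`, evaluation at `c₀` being exact. The transformations `η`
and `θ` induce chain maps `P ⟶ P_Φ` and `P(c₀) ⟶ P_Φ`. As `P` is projective and `P(c₀)` resolves
`K`, there is a chain map `P ⟶ P(c₀)` over `𝟙 K`; the composite `P ⟶ P(c₀) ⟶ P_Φ` and the map
`P ⟶ P_Φ` induced by `η` both lie over `𝟙 K`, hence are homotopic
(`exists_lift`, `homotopy_zero_of_lift_zero`).

Apply `colim`. The composite `colim P ⟶ colim P_Φ ⟶ colim P`, whose second map is the canonical
comparison `pre`, is the identity (`whiskeringLeft_map_pre`). Therefore the identity of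
`colim P` is homotopic to a map factoring through `colim P(c₀)`. Since `c ⟶ Φ c ⟵ c₀` for all `c`,
the category `C` is connected (`isConnected`) and the colimit of a constant functor is its value
(`constCompColimIso`), so `colim P(c₀)` is `P(c₀)`, which is exact in positive degrees.
Hence so is `colim P`. In degree `0`, `colim` is right exact, so its zeroth left derived functor
is `colim` itself.
-/

namespace DerivedColimConst

section Lifting

variable {B : Type*} [Category* B] [Abelian B] {P Q : ChainComplex B ℕ}
  [∀ n, Projective (P.X n)] {Z : B}

/-- The comparison theorem for a projective complex `P` and a resolution `Q` of `Z` whose terms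
need not be projective: existence. -/
lemma exists_lift (ε : Q.X 0 ⟶ Z) [Epi ε] (w : Q.d 1 0 ≫ ε = 0)
    (h₀ : (ShortComplex.mk _ _ w).Exact)
    (h : ∀ n, (ShortComplex.mk _ _ (Q.d_comp_d (n + 2) (n + 1) n)).Exact)
    (f : P.X 0 ⟶ Z) (hf : P.d 1 0 ≫ f = 0) :
    ∃ φ : P ⟶ Q, φ.f 0 ≫ ε = f := by
  let f₀ : P.X 0 ⟶ Q.X 0 := Projective.factorThru f ε
  let f₁ : P.X 1 ⟶ Q.X 1 := h₀.liftFromProjective (P.d 1 0 ≫ f₀) (by simp [f₀, hf])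
  have hf₁ : f₁ ≫ Q.d 1 0 = P.d 1 0 ≫ f₀ := h₀.liftFromProjective_comp _ _
  refine ⟨ChainComplex.mkHom _ _ f₀ f₁ hf₁ fun n ⟨g, g', w⟩ =>
    ⟨(h n).liftFromProjective (P.d (n + 2) (n + 1) ≫ g') (by simp [w]),
      (h n).liftFromProjective_comp _ _⟩, ?_⟩
  simp [f₀]

/-- The comparison theorem for a projective complex `P` and a resolution `Q` of `Z` whose terms
need not be projective: uniqueness up to homotopy, in the form that lifts of zero are
null-homotopic. -/
lemma homotopy_zero_of_lift_zero (ε : Q.X 0 ⟶ Z) (w : Q.d 1 0 ≫ ε = 0)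
    (h₀ : (ShortComplex.mk _ _ w).Exact)
    (h : ∀ n, (ShortComplex.mk _ _ (Q.d_comp_d (n + 2) (n + 1) n)).Exact)
    (φ : P ⟶ Q) (hφ : φ.f 0 ≫ ε = 0) :
    Nonempty (Homotopy φ 0) := by
  let s₀ : P.X 0 ⟶ Q.X 1 := h₀.liftFromProjective (φ.f 0) hφ
  have hs₀ : s₀ ≫ Q.d 1 0 = φ.f 0 := h₀.liftFromProjective_comp _ _
  let s₁ : P.X 1 ⟶ Q.X 2 := (h 0).liftFromProjective (φ.f 1 - P.d 1 0 ≫ s₀) (by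
    simp [Preadditive.sub_comp, hs₀])
  have hs₁ : s₁ ≫ Q.d 2 1 = φ.f 1 - P.d 1 0 ≫ s₀ := (h 0).liftFromProjective_comp _ _
  refine ⟨Homotopy.mkInductive _ s₀ hs₀.symm s₁ (by simp [hs₁]) fun n ⟨g, g', w⟩ =>
    ⟨(h (n + 1)).liftFromProjective (φ.f (n + 2) - P.d _ _ ≫ g') (by simp [w]), ?_⟩⟩
  have := (h (n + 1)).liftFromProjective_comp (φ.f (n + 2) - P.d _ _ ≫ g') (by simp [w])
  dsimp at this
  rw [this]
  simp

end Lifting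

variable {C : Type u} [Category.{v} C] {A : Type w} [Category.{w'} A]

lemma isConnected {c₀ : C} {Φ : C ⥤ C} (η : 𝟭 C ⟶ Φ) (θ : (Functor.const C).obj c₀ ⟶ Φ) :
    IsConnected C := by
  have : Nonempty C := ⟨c₀⟩
  have h (c : C) : Zigzag c c₀ := Zigzag.of_hom_inv (η.app c) (θ.app c)
  exact zigzag_isConnected fun c d => (h c).trans (h d).symm

/-- Precomposition with `Ψ`, as an endofunctor of `C ⥤ A`. For `Ψ` constant at `c₀` it sends `F` to
the constant functor with value `F c₀`. -/
abbrev precomp (A : Type w) [Category.{w'} A] (Ψ : C ⥤ C) : (C ⥤ A) ⥤ (C ⥤ A) :=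
  (Functor.whiskeringLeft C C A).obj Ψ

variable [HasColimitsOfShape C A]

/-- Over a connected category the colimit of a constant functor is its value, naturally: `const` is
fully faithful, so the counit of `colim ⊣ const` is invertible. -/
noncomputable def constCompColimIso [IsConnected C] : Functor.const C ⋙ colim ≅ 𝟭 A :=
  asIso (colimConstAdj (J := C) (C := A)).counit

/-- The canonical comparison `colim (F ∘ Φ) ⟶ colim F`, natural in `F`. -/
noncomputable def pre (Φ : C ⥤ C) :
    precomp A Φ ⋙ colim ⟶ colim where
  app F := colimit.pre F Φ
  naturality F G f := by
    refine colimit.hom_ext fun c => ?_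
    simp

/-- The composite `F c ⟶ F (Φ c) ⟶ colim F` is the leg at `c`, by the cocone relation for `η`. -/
lemma whiskeringLeft_map_pre {Φ : C ⥤ C} (η : 𝟭 C ⟶ Φ) (F : C ⥤ A) :
    colim.map (((Functor.whiskeringLeft C C A).map η).app F) ≫ (pre Φ).app F =
      𝟙 (colim.obj F) := by
  refine colimit.hom_ext fun c => ?_
  simp only [pre, colim_map, ι_colimMap_assoc, Functor.whiskeringLeft_map_app_app]
  erw [colimit.ι_pre F Φ c, Category.comp_id]
  exact colimit.w F (η.app c)

variable [Abelian A]

/-- A projective resolution of a constant functor remains exact in positive degrees after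
applying `colim`. -/
lemma exactAt_colim {c₀ : C} {Φ : C ⥤ C} (η : 𝟭 C ⟶ Φ)
    (θ : (Functor.const C).obj c₀ ⟶ Φ) {A₀ : A}
    (P : ChainComplex (C ⥤ A) ℕ) [∀ n, Projective (P.X n)] (ε : P.X 0 ⟶ (Functor.const C).obj A₀) [Epi ε] (w : P.d 1 0 ≫ ε = 0)
    (h₀ : (ShortComplex.mk _ _ w).Exact)
    (h : ∀ n, (ShortComplex.mk _ _ (P.d_comp_d (n + 2) (n + 1) n)).Exact) (n : ℕ) :
    (((colim (J := C) (C := A)).mapHomologicalComplex _).obj P).ExactAt (n + 1) := by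
  have := isConnected η θ
  let G := precomp A ((Functor.const C).obj c₀)
  let T := precomp A Φ
  have (Ψ : C ⥤ C) : (precomp A Ψ).PreservesHomology := inferInstance
  let GP := (G.mapHomologicalComplex _).obj P
  let TP := (T.mapHomologicalComplex _).obj P
  let a : P ⟶ TP := (NatTrans.mapHomologicalComplex ((Functor.whiskeringLeft C C A).map η) _).app P
  let b : GP ⟶ TP := (NatTrans.mapHomologicalComplex ((Functor.whiskeringLeft C C A).map θ) _).app P
  let L := (colim (J := C) (C := A)).mapHomologicalComplex (ComplexShape.down ℕ)
  let γ : L.obj TP ⟶ L.obj P :=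
    (NatTrans.mapHomologicalComplex (pre Φ) _).app P
  -- Precomposing the constant functor at `A₀` gives back that functor, definitionally.
  let εG : GP.X 0 ⟶ (Functor.const C).obj A₀ := G.map ε
  let εT : TP.X 0 ⟶ (Functor.const C).obj A₀ := T.map ε
  have hεG : GP.d 1 0 ≫ εG = 0 := ((ShortComplex.mk _ _ w).map G).zero
  have hεT : TP.d 1 0 ≫ εT = 0 := ((ShortComplex.mk _ _ w).map T).zero
  have : Epi εG := inferInstanceAs (Epi (G.map ε))
  obtain ⟨φ, hφ⟩ : ∃ φ : P ⟶ GP, φ.f 0 ≫ εG = ε :=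
    exists_lift εG hεG (h₀.map G) (fun n => (h n).map G) ε w
  -- Both sides lie over the identity of the constant functor: `ε` is natural along `η` and `θ`,
  -- which the constant functor sends to identities.
  have key : a.f 0 ≫ εT = φ.f 0 ≫ b.f 0 ≫ εT := by
    ext c
    have h₁ : ε.app c = (φ.f 0).app c ≫ ε.app c₀ := (NatTrans.congr_app hφ c).symm
    have h₂ := ε.naturality (η.app c)
    have h₃ := ε.naturality (θ.app c)
    dsimp at h₂ h₃
    rw [Category.comp_id] at h₂ h₃
    exact h₂.trans (h₁.trans (congrArg ((φ.f 0).app c ≫ ·) h₃.symm))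
  obtain ⟨H⟩ : Nonempty (Homotopy (a - φ ≫ b) 0) :=
    homotopy_zero_of_lift_zero εT hεT (h₀.map T) (fun n => (h n).map T) _
      ((Preadditive.sub_comp _ _ _).trans
        (sub_eq_zero.2 (key.trans (Category.assoc _ _ _).symm)))
  have hG (n : ℕ) : (L.obj GP).ExactAt (n + 1) := by
    let e : G ⋙ colim ≅ (evaluation C A).obj c₀ :=
      Functor.isoWhiskerRight (NatIso.ofComponents (Functor.constComp C c₀) :
        G ≅ (evaluation C A).obj c₀ ⋙ Functor.const C) colim ≪≫
        Functor.isoWhiskerLeft ((evaluation C A).obj c₀) constCompColimIso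
    have : PreservesFiniteLimits (G ⋙ colim) := preservesFiniteLimits_of_natIso e.symm
    have : PreservesFiniteColimits (G ⋙ colim) := preservesFiniteColimits_of_natIso e.symm
    rw [HomologicalComplex.exactAt_iff' _ (n + 2) (n + 1) n (by simp) (by simp)]
    exact (h n).map (G ⋙ colim)
  have hγ : L.map a ≫ γ = 𝟙 _ := by
    ext n : 1
    exact whiskeringLeft_map_pre η (P.X n)
  have hL : HomologicalComplex.homologyMap (L.map a) (n + 1) =
      HomologicalComplex.homologyMap (L.map φ ≫ L.map b) (n + 1) := by
    rw [← L.map_comp]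
    exact (colim.mapHomotopy (Homotopy.equivSubZero.symm H)).homologyMap_eq _
  have hGP := (HomologicalComplex.exactAt_iff_isZero_homology _ _).1 (hG n)
  change (L.obj P).ExactAt (n + 1)
  rw [HomologicalComplex.exactAt_iff_isZero_homology, IsZero.iff_id_eq_zero,
    ← HomologicalComplex.homologyMap_id, ← hγ, HomologicalComplex.homologyMap_comp, hL,
    HomologicalComplex.homologyMap_comp,
    hGP.eq_of_tgt (HomologicalComplex.homologyMap (L.map φ) _) 0]
  simp

end DerivedColimConst

theorem stmt2 {C : Type u} [Category.{v} C] {A : Type w} [Category.{w'} A] [Abelian A]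
    [HasCoproducts.{u} A] [HasCoproducts.{w'} A] [AB4 A] [EnoughProjectives A]
    [HasColimitsOfShape C A] [EnoughProjectives (C ⥤ A)]
    (c₀ : C) (Φ : C ⥤ C) (η : 𝟭 C ⟶ Φ) (θ : (Functor.const C).obj c₀ ⟶ Φ)
    (A₀ : A) :
    Nonempty ((derivedColim C A 0).obj ((Functor.const C).obj A₀) ≅ A₀) ∧
    ∀ n : ℕ, 1 ≤ n → IsZero ((derivedColim C A n).obj ((Functor.const C).obj A₀)) := by
  have := DerivedColimConst.isConnected η θ
  refine ⟨⟨colim.leftDerivedZeroIsoSelf.app _ ≪≫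
    DerivedColimConst.constCompColimIso.app A₀⟩, fun n hn => ?_⟩
  obtain ⟨n, rfl⟩ := Nat.exists_eq_add_of_le' hn
  let P := projectiveResolution ((Functor.const C).obj A₀)
  refine IsZero.of_iso ?_ (P.isoLeftDerivedObj colim (n + 1))
  have : Epi (Y := (Functor.const C).obj A₀) (P.π.f 0) := inferInstanceAs (Epi (P.π.f 0))
  exact (HomologicalComplex.exactAt_iff_isZero_homology _ _).1
    (DerivedColimConst.exactAt_colim η θ P.complex (P.π.f 0) P.complex_d_comp_π_f_zero
      P.exact₀ P.exact_succ n)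
end

section
/- Let D be a small category, C a full subcategory of D such that every object of D is a retract of an object of C (i.e., for every d in D there exist c in C and morphisms s : d → c, r : c → d with r ∘ s = id_d). Let A be an abelian category with small coproducts, exact coproducts (AB4), and enough projectives. Then for any functor M : D → A and every n ≥ 0 there is an isomorphism colim_n (M|_C) ≅ colim_n M, where M|_C = ι ∘ M is the restriction of M along the inclusion ι : C → D. -/
/-!
Precomposition with `ι` is an equivalence `(D ⥤ A) ≌ (C ⥤ A)`, because `A`, being abelian, is
idempotent complete: `D` sits between `C` and its Karoubi envelope, and every functor `C ⥤ A`
extends to `Karoubi C` (`whiskeringLeft_isEquivalence_of_retract`). Hence restriction is exact and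
carries projective resolutions of `M` to projective resolutions of `ι ⋙ M`. Moreover `ι` is final
(`final_of_retract`), so restriction followed by `colim` over `C` is `colim` over `D`; the two
left derived functors are therefore computed by isomorphic complexes.
-/

/-!
STATEMENT 3: Let `C` be a full subcategory of a small category `D` (realized as a fully
faithful functor `ι : C ⥤ D`) such that every object of `D` is a retract of an object of
`C`.  Let `A` be an abelian category with small coproducts, exact coproducts (AB4) and
enough projectives.  Then for every `M : D ⥤ A` and every `n ≥ 0`,
`colimₙ (M|_C) ≅ colimₙ M`.
-/

open CategoryTheory CategoryTheory.Limits

universe w' w v u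

section Retract

variable {C : Type u} [Category.{v} C] {D : Type u} [Category.{v} D] (ι : C ⥤ D)

lemma final_of_retract [ι.Full]
    (hretract : ∀ d : D, ∃ (c : C) (s : d ⟶ ι.obj c) (r : ι.obj c ⟶ d), s ≫ r = 𝟙 d) :
    ι.Final := by
  refine ⟨fun d => ?_⟩
  obtain ⟨c, s, r, h⟩ := hretract d
  have : Nonempty (StructuredArrow d ι) := ⟨StructuredArrow.mk s⟩
  -- `s` maps to every object `X` by a lift of `r ≫ X.hom`, so all objects are connected to it.
  have key (X : StructuredArrow d ι) : Zigzag (StructuredArrow.mk s) X :=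
    Zigzag.of_hom (StructuredArrow.homMk (ι.preimage (r ≫ X.hom)) (by simp [reassoc_of% h]))
  exact zigzag_isConnected fun X Y => (key X).symm.trans (key Y)

variable [ι.Full] [ι.Faithful] {c : D → C} (s : ∀ d, d ⟶ ι.obj (c d))
  (r : ∀ d, ι.obj (c d) ⟶ d) (h : ∀ d, s d ≫ r d = 𝟙 d)

/-- The functor `D ⥤ Karoubi C` sending `d` to the formal image of the idempotent `r d ≫ s d`
on `c d`, for a chosen presentation of each `d` as a retract of `ι.obj (c d)`. -/
noncomputable def toKaroubiOfRetract : D ⥤ Idempotents.Karoubi C where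
  obj d :=
    { X := c d
      p := ι.preimage (r d ≫ s d)
      idem := ι.map_injective (by simp [reassoc_of% h]) }
  map {d d'} f :=
    { f := ι.preimage (r d ≫ f ≫ s d')
      comm := ι.map_injective (by simp [reassoc_of% h]) }
  map_id d := by
    ext
    exact ι.map_injective (by simp)
  map_comp f g := by
    ext
    exact ι.map_injective (by simp [reassoc_of% h])

/-- The chosen retractions identify `toKaroubiOfRetract` restricted to `C` with the canonical
functor to the Karoubi envelope. -/
noncomputable def compToKaroubiOfRetractIso :
    ι ⋙ toKaroubiOfRetract ι s r h ≅ Idempotents.toKaroubi C :=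
  NatIso.ofComponents
    (fun x =>
      { hom :=
          { f := ι.preimage (r (ι.obj x))
            comm := by
              change ι.preimage (r (ι.obj x) ≫ s (ι.obj x)) ≫ ι.preimage (r (ι.obj x)) ≫ 𝟙 x =
                ι.preimage (r (ι.obj x))
              exact ι.map_injective (by simp [h]) }
        inv :=
          { f := ι.preimage (s (ι.obj x))
            comm := by
              change 𝟙 x ≫ ι.preimage (s (ι.obj x)) ≫ ι.preimage (r (ι.obj x) ≫ s (ι.obj x)) =
                ι.preimage (s (ι.obj x))
              exact ι.map_injective (by simp [reassoc_of% h]) }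
        hom_inv_id := by
          ext
          change ι.preimage (r (ι.obj x)) ≫ ι.preimage (s (ι.obj x)) =
            ι.preimage (r (ι.obj x) ≫ s (ι.obj x))
          exact ι.map_injective (by simp)
        inv_hom_id := by
          ext
          change ι.preimage (s (ι.obj x)) ≫ ι.preimage (r (ι.obj x)) = 𝟙 x
          exact ι.map_injective (by simp [h]) })
    (fun {x y} f => by
      ext
      change ι.preimage (r (ι.obj x) ≫ ι.map f ≫ s (ι.obj y)) ≫ ι.preimage (r (ι.obj y)) =
        ι.preimage (r (ι.obj x)) ≫ f
      exact ι.map_injective (by simp [h]))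

/-- Restriction to `C` is an equivalence on functors with values in an idempotent complete
category. -/
lemma whiskeringLeft_isEquivalence_of_retract
    (hretract : ∀ d : D, ∃ (c : C) (s : d ⟶ ι.obj c) (r : ι.obj c ⟶ d), s ≫ r = 𝟙 d)
    (A : Type w) [Category.{w'} A] [IsIdempotentComplete A] :
    ((Functor.whiskeringLeft C D A).obj ι).IsEquivalence := by
  choose c s r h using hretract
  refine { faithful := ⟨fun {F G} a b hab => ?_⟩, full := ⟨fun {F G} τ => ?_⟩,
           essSurj := ⟨fun N => ?_⟩ }
  · ext d
    have e : a.app (ι.obj (c d)) = b.app (ι.obj (c d)) := NatTrans.congr_app hab (c d)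
    have : IsSplitEpi (r d) := ⟨⟨⟨s d, h d⟩⟩⟩
    rw [← cancel_epi (F.map (r d)), a.naturality, b.naturality, e]
  -- Extend `τ` to `d` as a retract of `τ.app (c d)`; by fullness of `ι`, `τ` is natural for all
  -- morphisms of `D` between objects of `C`.
  · have nat (x y : C) (f : ι.obj x ⟶ ι.obj y) :
        F.map f ≫ τ.app y = τ.app x ≫ G.map f := by
      simpa using τ.naturality (ι.preimage f)
    refine ⟨{ app d := F.map (s d) ≫ τ.app (c d) ≫ G.map (r d)
              naturality d d' f := ?_ }, ?_⟩
    · have e : f ≫ s d' = s d ≫ (r d ≫ f ≫ s d') := by simp [reassoc_of% h]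
      have e' : (r d ≫ f ≫ s d') ≫ r d' = r d ≫ f := by simp [h]
      rw [← F.map_comp_assoc, e, F.map_comp_assoc, reassoc_of% (nat _ _ (r d ≫ f ≫ s d')),
        ← G.map_comp, e', G.map_comp, Category.assoc, Category.assoc]
    · ext x
      change F.map (s (ι.obj x)) ≫ τ.app (c (ι.obj x)) ≫ G.map (r (ι.obj x)) = τ.app x
      rw [← nat, ← F.map_comp_assoc, h, F.map_id, Category.id_comp]
  -- Extend `N` to the Karoubi envelope of `C`, then restrict to `D`.
  · let W := (Functor.whiskeringLeft C (Idempotents.Karoubi C) A).obj (Idempotents.toKaroubi C)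
    exact ⟨toKaroubiOfRetract ι s r h ⋙ W.objPreimage N,
      ⟨Functor.isoWhiskerRight (compToKaroubiOfRetractIso ι s r h) (W.objPreimage N) ≪≫
        W.objObjPreimageIso N⟩⟩

end Retract

theorem stmt3 {C : Type u} [Category.{v} C] {D : Type u} [Category.{v} D]
    (ι : C ⥤ D) [ι.Full] [ι.Faithful]
    (hretract : ∀ d : D, ∃ (c : C) (s : d ⟶ ι.obj c) (r : ι.obj c ⟶ d), s ≫ r = 𝟙 d)
    {A : Type w} [Category.{w'} A] [Abelian A]
    [HasCoproducts.{u} A] [HasCoproducts.{w'} A] [AB4 A] [EnoughProjectives A]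
    [HasColimitsOfShape C A] [HasColimitsOfShape D A]
    [EnoughProjectives (C ⥤ A)] [EnoughProjectives (D ⥤ A)]
    (M : D ⥤ A) (n : ℕ) :
    Nonempty ((derivedColim C A n).obj (ι ⋙ M) ≅ (derivedColim D A n).obj M) := by
  have := final_of_retract ι hretract
  let E := (Functor.whiskeringLeft C D A).obj ι
  have : E.IsEquivalence := whiskeringLeft_isEquivalence_of_retract ι hretract A
  have : E.PreservesProjectiveObjects :=
    ⟨fun {P} hP => E.asEquivalence.toAdjunction.map_projective P hP⟩
  have : E.Additive := { map_add := rfl }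
  let P : ProjectiveResolution M := ProjectiveResolution.of M
  let e : E ⋙ colim (J := C) (C := A) ≅ colim (J := D) (C := A) := Functor.Final.colimIso ι
  exact ⟨(E.mapProjectiveResolution P).isoLeftDerivedObj colim n ≪≫
    (HomologicalComplex.homologyFunctor A _ n).mapIso
      ((NatIso.mapHomologicalComplex e _).app P.complex) ≪≫
    (P.isoLeftDerivedObj colim n).symm⟩
end

section
/- Let C be a small category with binary coproducts, A an abelian category with small coproducts, exact coproducts (AB4), and enough projectives, Φ : C × C → A a functor, and Δ : C → C × C the diagonal functor. Then for every n ≥ 0 there is an isomorphism colim_n (Φ ∘ Δ) ≅ colim_n Φ, where the left-hand derived colimit is taken over C and the right-hand one over C × C. -/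
/-!
The diagonal `Δ : C ⥤ C × C` is right adjoint to the binary coproduct functor `⨿ : C × C ⥤ C`.
For any adjunction `L ⊣ R` with `R : C ⥤ D`, restriction along `R` preserves derived colimits
(`nonempty_derivedColim_iso_of_adjunction`):

* precomposition turns `L ⊣ R` into `(R ⋙ -) ⊣ (L ⋙ -)`; the right adjoint `L ⋙ -` preserves
  epimorphisms, these being pointwise, so `R ⋙ -` preserves projective objects;
* `R ⋙ -` is exact, so it sends a projective resolution `P` of `Φ` to one of `R ⋙ Φ`;
* `R` is final, so `colim (R ⋙ P) ≅ colim P` as complexes, and it remains to take homology.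
-/

/-!
STATEMENT 4: Let `C` be a small category with binary coproducts, `A` an abelian category
with small coproducts, exact coproducts (AB4) and enough projectives, `Φ : C × C ⥤ A` a
functor and `Δ : C ⥤ C × C` the diagonal functor.  Then for every `n ≥ 0`,
`colimₙ (Φ ∘ Δ) ≅ colimₙ Φ`.
-/

open CategoryTheory CategoryTheory.Limits

universe w' w v u

/-- The binary coproduct, as a functor of both variables, is left adjoint to the diagonal. -/
noncomputable def coprodDiagAdj (C : Type u) [Category.{v} C] [HasBinaryCoproducts C] :
    Functor.uncurry.obj (coprod.functor (C := C)) ⊣ Functor.diag C :=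
  Adjunction.mkOfHomEquiv
    { homEquiv := fun X Y =>
        { toFun := fun f => Prod.mkHom (coprod.inl (X := X.1) (Y := X.2) ≫ f) (coprod.inr ≫ f)
          invFun := fun g => coprod.desc g.1 g.2
          left_inv := fun _ => coprod.hom_ext (coprod.inl_desc _ _) (coprod.inr_desc _ _)
          right_inv := fun _ => Prod.hom_ext (coprod.inl_desc _ _) (coprod.inr_desc _ _) }
      homEquiv_naturality_left_symm := fun {X' X Y} f g => by
        change coprod.desc (f.1 ≫ g.1) (f.2 ≫ g.2) =
          (coprod.map f.1 (𝟙 X'.2) ≫ coprod.map (𝟙 X.1) f.2) ≫ coprod.desc g.1 g.2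
        simp
      homEquiv_naturality_right := fun f g =>
        Prod.hom_ext (Category.assoc _ _ _).symm (Category.assoc _ _ _).symm }

/-- Restriction along a right adjoint `R` preserves derived colimits. -/
theorem nonempty_derivedColim_iso_of_adjunction {C : Type*} [Category* C]
    {D : Type*} [Category* D] {L : D ⥤ C} {R : C ⥤ D} (adj : L ⊣ R)
    {A : Type*} [Category* A] [Abelian A]
    [HasColimitsOfShape C A] [HasColimitsOfShape D A]
    [EnoughProjectives (C ⥤ A)] [EnoughProjectives (D ⥤ A)]
    {Φ : D ⥤ A} (P : ProjectiveResolution Φ) (n : ℕ) :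
    Nonempty ((derivedColim C A n).obj (R ⋙ Φ) ≅ (derivedColim D A n).obj Φ) := by
  let F := (Functor.whiskeringLeft C D A).obj R
  let G := (Functor.whiskeringLeft D C A).obj L
  have : G.PreservesEpimorphisms := inferInstance
  have : F.PreservesProjectiveObjects :=
    Functor.preservesProjectiveObjects_of_adjunction_of_preservesEpimorphisms
      (adj.whiskerLeft A)
  have : F.Additive := { map_add := rfl }
  have : PreservesFiniteLimits F := ⟨fun J _ _ => inferInstance⟩
  have : PreservesFiniteColimits F := ⟨fun J _ _ => inferInstance⟩
  have : R.Final := Functor.final_of_adjunction adj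
  let e : F ⋙ colim ≅ colim (J := D) (C := A) := Functor.Final.colimIso R
  exact ⟨(F.mapProjectiveResolution P).isoLeftDerivedObj colim n ≪≫
    (HomologicalComplex.homologyFunctor A _ n).mapIso
      ((Functor.mapHomologicalComplexCompIso e _).app P.complex) ≪≫
    (P.isoLeftDerivedObj colim n).symm⟩

theorem stmt4 {C : Type u} [Category.{v} C] [HasBinaryCoproducts C]
    {A : Type w} [Category.{w'} A] [Abelian A]
    [HasCoproducts.{u} A] [HasCoproducts.{w'} A] [AB4 A] [EnoughProjectives A]
    [HasColimitsOfShape C A] [HasColimitsOfShape (C × C) A]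
    [EnoughProjectives (C ⥤ A)] [EnoughProjectives ((C × C) ⥤ A)]
    (Φ : C × C ⥤ A) (n : ℕ) :
    Nonempty ((derivedColim C A n).obj (Functor.diag C ⋙ Φ) ≅
      (derivedColim (C × C) A n).obj Φ) := by
  exact nonempty_derivedColim_iso_of_adjunction (coprodDiagAdj C) (projectiveResolution Φ) n
end

section
/- Let C be a strongly connected small category, i.e., the hom-set C(c,c') is nonempty for any two objects c, c'. Let M : C → A be a functor to a cocomplete abelian category A. Then for every object c0 of C: (i) the canonical colimit cocone morphism i_{c0} : M(c0) → colim M is an epimorphism; (ii) i_{c0} ∘ M(α) = i_{c0} ∘ M(β) for any object c and any two morphisms α, β : c → c0; and (iii) i_{c0} is initial among morphisms with property (ii): for any object X of A and any morphism f : M(c0) → X satisfying f ∘ M(α) = f ∘ M(β) for all objects c and all α, β : c → c0, there is a unique morphism g : colim M → X with g ∘ i_{c0} = f. -/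
/-!
Every leg of the colimit cocone factors through the leg at `c₀`, since each `c` admits a morphism
to `c₀`; hence that leg is an epimorphism. A morphism `f` out of `M(c₀)` that does not distinguish
parallel morphisms into `c₀` extends to a cocone with legs `M(α) ≫ f`, where `α : c ⟶ c₀` is
arbitrary, and the induced map out of the colimit restricts to `f` because one may compare the
chosen endomorphism of `c₀` with the identity.
-/

open CategoryTheory CategoryTheory.Limits

universe w v u

theorem stmt6 {C : Type u} [SmallCategory C]
    (hconn : ∀ c c' : C, Nonempty (c ⟶ c'))
    {A : Type v} [Category.{w} A] [Abelian A] [HasColimitsOfSize.{u, u} A]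
    (M : C ⥤ A) (c₀ : C) :
    Epi (colimit.ι M c₀) ∧
    (∀ (c : C) (α β : c ⟶ c₀), M.map α ≫ colimit.ι M c₀ = M.map β ≫ colimit.ι M c₀) ∧
    (∀ (X : A) (f : M.obj c₀ ⟶ X),
      (∀ (c : C) (α β : c ⟶ c₀), M.map α ≫ f = M.map β ≫ f) →
      ∃! g : colimit M ⟶ X, colimit.ι M c₀ ≫ g = f) := by
  have hepi : Epi (colimit.ι M c₀) := ⟨fun g h hgh => colimit.hom_ext fun c => by
    obtain ⟨α⟩ := hconn c c₀
    rw [← colimit.w M α, Category.assoc, Category.assoc, hgh]⟩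
  refine ⟨hepi, fun c α β => by rw [colimit.w, colimit.w], fun X f hf => ?_⟩
  -- The leg at `c` is `M(α) ≫ f` for an arbitrary `α : c ⟶ c₀`; the hypothesis on `f` makes
  -- it independent of `α`, which yields naturality.
  let s : Cocone M :=
    { pt := X
      ι :=
        { app := fun c => M.map (hconn c c₀).some ≫ f
          naturality := fun c c' u => by
            simpa using hf c (u ≫ (hconn c' c₀).some) (hconn c c₀).some } }
  have hs : colimit.ι M c₀ ≫ colimit.desc M s = f := by
    rw [colimit.ι_desc]
    simpa [s] using hf c₀ (hconn c₀ c₀).some (𝟙 c₀)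
  exact ⟨colimit.desc M s, hs, fun g hg => (cancel_epi (colimit.ι M c₀)).1 (hg.trans hs.symm)⟩
end
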